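/- arXiv:1210.3048 — 2 statements merged into one kernel-verified Lean document; each statement's English description precedes it below -/
import Mathlib

section
/- Let X be a shift space over a finite alphabet 𝒜 and let a, b ∈ 𝒜 with a ≠ b. Then X is flow equivalent to X^{a↦ab}; moreover the 1-block code that fixes every letter of 𝒜 and sends ◇ to b restricts to a conjugacy from X^{a↦a◇} onto X^{a↦ab}. -/
namespace SymbolicDynamics

/-! ### Basic symbolic dynamics set-up

All shift spaces are realized inside the full shift over the countable ambient
alphabet `ℕ`; an actual shift space uses only a finite subset of `ℕ` as its
alphabet.  This gives a uniform setting in which shift spaces over varying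
finite alphabets can be compared (as required by flow equivalence). -/

/-- Biinfinite sequences over the ambient alphabet `ℕ`. -/
abbrev Seq : Type := ℤ → ℕ

/-- The shift map `σ`, `(σ x) i = x (i+1)`. -/
def shift (x : Seq) : Seq := fun i => x (i + 1)

/-- The word `x_i x_{i+1} ⋯ x_{i+n-1}` of length `n` occurring in `x` at position `i`. -/
def wordAt (x : Seq) (i : ℤ) (n : ℕ) : List ℕ :=
  List.ofFn fun k : Fin n => x (i + (k.val : ℤ))

/-- `w` occurs as a factor of the biinfinite sequence `x`. -/
def FactorOf (w : List ℕ) (x : Seq) : Prop := ∃ i : ℤ, wordAt x i w.length = w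

/-- The language `B(X)`: all finite words occurring in points of `X`. -/
def lang (X : Set Seq) : Set (List ℕ) := {w | ∃ x ∈ X, FactorOf w x}

/-- `X_F`: the set of biinfinite sequences containing no word of `F` as a factor. -/
def XF (F : Set (List ℕ)) : Set Seq := {x | ∀ w ∈ F, ¬ FactorOf w x}

/-- `X` is a shift space over the finite alphabet `A ⊆ ℕ`: `X` is a closed,
shift-invariant set of biinfinite sequences with letters in `A`. -/
def IsSubshift (A : Set ℕ) (X : Set Seq) : Prop :=
  A.Finite ∧ IsClosed X ∧ (∀ x, x ∈ X ↔ shift x ∈ X) ∧ ∀ x ∈ X, ∀ i, x i ∈ A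

/-- `X` is a shift space (over some finite alphabet). -/
def IsShiftSpace (X : Set Seq) : Prop := ∃ A : Set ℕ, IsSubshift A X

/-- A conjugacy between `X` and `Y`: a shift-commuting homeomorphism. -/
def Conjugate (X Y : Set Seq) : Prop :=
  ∃ φ : ↥X ≃ₜ ↥Y, ∀ x y : ↥X, shift x.1 = y.1 → shift (φ x).1 = (φ y).1

/-- The (globally defined) map `φ` restricts to a conjugacy from `X` onto `Y`:
there is a shift-commuting homeomorphism `X → Y` whose underlying map is `φ`. -/
def ConjugacyVia (φ : Seq → Seq) (X Y : Set Seq) : Prop :=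
  ∃ h : ↥X ≃ₜ ↥Y, (∀ x : ↥X, (h x).1 = φ x.1) ∧
    ∀ x y : ↥X, shift x.1 = y.1 → shift (h x).1 = (h y).1

/-- `y` is obtained from `x` by replacing every occurrence of the letter `a` by
`a ◇` (with `◇ = d`), possibly followed by one shift.  The reindexing function
`p` records the position in `y` of the `k`-th letter of `x`. -/
def ExpandsTo (a d : ℕ) (x y : Seq) : Prop :=
  ∃ p : ℤ → ℤ, (p 0 = 0 ∨ p 0 = -1) ∧
    (∀ k, p (k + 1) = p k + if x k = a then 2 else 1) ∧
    (∀ k, y (p k) = x k) ∧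
    ∀ k, x k = a → y (p k + 1) = d

/-- The symbol expansion `X^{a ↦ a◇}` with `◇ = d` (a symbol not in the alphabet
of `X`): all sequences obtained from points of `X` by replacing every
occurrence of `a` by `a◇`, together with all shifts of such sequences. -/
def symbolExpansion (X : Set Seq) (a d : ℕ) : Set Seq := {y | ∃ x ∈ X, ExpandsTo a d x y}

/-- Flow equivalence: the smallest equivalence relation on shift spaces (over
varying finite alphabets) containing conjugacy and relating every shift space
`X` to its symbol expansion `X^{a ↦ a◇}` for every letter `a` of the alphabet of
`X` and every new symbol `◇` (Parry–Sullivan). -/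
inductive FlowEquiv : Set Seq → Set Seq → Prop
  | of_conjugate {X Y : Set Seq} (hX : IsShiftSpace X) (hY : IsShiftSpace Y)
      (h : Conjugate X Y) : FlowEquiv X Y
  | expand {X : Set Seq} {A : Set ℕ} (a d : ℕ) (hX : IsSubshift A X)
      (ha : a ∈ A) (hd : d ∉ A) : FlowEquiv X (symbolExpansion X a d)
  | symm {X Y : Set Seq} : FlowEquiv X Y → FlowEquiv Y X
  | trans {X Y Z : Set Seq} : FlowEquiv X Y → FlowEquiv Y Z → FlowEquiv X Z

/-- The full shift on `k` symbols (realized on the alphabet `{0, …, k-1}`). -/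
def fullShift (k : ℕ) : Set Seq := {x | ∀ i, x i < k}

/-- `X` is a shift of finite type. -/
def IsSFT (X : Set Seq) : Prop := ∃ F : Set (List ℕ), F.Finite ∧ X = XF F

/-- `X` is an `n`-step shift of finite type:  `X = X_F` for a finite set `F` of
forbidden words of length `n+1`. -/
def IsNStepSFT (X : Set Seq) (n : ℕ) : Prop :=
  ∃ F : Set (List ℕ), F.Finite ∧ (∀ w ∈ F, w.length = n + 1) ∧ X = XF F

/-- Irreducibility of a shift space. -/
def IsIrreducibleShift (X : Set Seq) : Prop :=
  ∀ u ∈ lang X, ∀ w ∈ lang X, ∃ v ∈ lang X, u ++ v ++ w ∈ lang X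

/-! The 1-block code merging `◇` into `b` forgets nothing: in a point of `X^{a ↦ a◇}` the symbol `◇`
occurs exactly after the occurrences of `a`, and since `a ≠ b` merging creates no new `a`, so the
code is inverted by rewriting the letter after every `a` as `◇`. Flow equivalence then needs
`X^{a ↦ a◇}` and its image to be shift spaces. The former is closed because it is a projection of
the compact set of all triples of a point of `X`, a reindexing function and an expanded sequence:
a reindexing function starts at `0` or `-1` and has steps in `{1, 2}`, so each of its values is
bounded in terms of the index alone. -/

section Shift

lemma shift_injective : Function.Injective shift := fun x y h => by
  funext i
  simpa only [shift, sub_add_cancel] using congrFun h (i - 1)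

lemma shift_surjective : Function.Surjective shift := fun x =>
  ⟨fun i => x (i - 1), funext fun i => congrArg x (add_sub_cancel_right i 1)⟩

lemma shift_translate (x : Seq) (k : ℤ) :
    shift (fun i => x (i + k)) = fun i => x (i + (k + 1)) :=
  funext fun i => congrArg x (by ring)

variable {X : Set Seq}

lemma translate_mem (hX : ∀ x, x ∈ X ↔ shift x ∈ X) {x : Seq} (hx : x ∈ X) (k : ℤ) :
    (fun i => x (i + k)) ∈ X := by
  induction k using Int.induction_on with
  | zero => simpa only [add_zero] using hx
  | succ k ih => simpa only [shift_translate] using (hX _).1 ih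
  | pred k ih =>
    rw [hX, shift_translate, sub_add_cancel]
    exact ih

lemma isCompact_of_finite_alphabet {A : Set ℕ} (hA : A.Finite) (hX : IsClosed X)
    (hXA : ∀ x ∈ X, ∀ i, x i ∈ A) : IsCompact X :=
  (isCompact_univ_pi fun _ : ℤ => hA.isCompact).of_isClosed_subset hX fun x hx i _ => hXA x hx i

lemma IsSubshift.image {A B : Set ℕ} (hX : IsSubshift A X) {φ : Seq → Seq} (hφ : Continuous φ)
    (hshift : ∀ x, shift (φ x) = φ (shift x)) (hB : B.Finite) (hφB : ∀ x ∈ X, ∀ i, φ x i ∈ B) :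
    IsSubshift B (φ '' X) := by
  obtain ⟨hA, hclosed, hinv, hXA⟩ := hX
  refine ⟨hB, ((isCompact_of_finite_alphabet hA hclosed hXA).image hφ).isClosed,
    fun z => ⟨?_, ?_⟩, Set.forall_mem_image.2 hφB⟩
  · rintro ⟨x, hx, rfl⟩
    exact ⟨shift x, (hinv x).1 hx, (hshift x).symm⟩
  · rintro ⟨y, hy, hyz⟩
    obtain ⟨x, rfl⟩ := shift_surjective y
    exact ⟨x, (hinv x).2 hy, shift_injective ((hshift x).trans hyz)⟩

lemma conjugacyVia_image_of_leftInvOn {φ ψ : Seq → Seq} (hφ : Continuous φ) (hψ : Continuous ψ)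
    (hshift : ∀ x, shift (φ x) = φ (shift x)) (hinv : Set.LeftInvOn ψ φ X) :
    ConjugacyVia φ X (φ '' X) := by
  have hψX : Set.MapsTo ψ (φ '' X) X := by
    rintro _ ⟨x, hx, rfl⟩
    rwa [hinv hx]
  have hinv' : Set.RightInvOn ψ φ (φ '' X) := by
    rintro _ ⟨x, hx, rfl⟩
    rw [hinv hx]
  refine ⟨
    { toFun := (Set.mapsTo_image φ X).restrict
      invFun := hψX.restrict
      left_inv := fun x => Subtype.ext (hinv x.2)
      right_inv := fun z => Subtype.ext (hinv' z.2)
      continuous_toFun := hφ.restrict _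
      continuous_invFun := hψ.restrict _ },
    fun _ => rfl, fun x y hxy => ?_⟩
  exact (hshift x.1).trans (congrArg φ hxy)

lemma ConjugacyVia.conjugate {φ : Seq → Seq} {Y : Set Seq} (h : ConjugacyVia φ X Y) :
    Conjugate X Y :=
  let ⟨e, _, he⟩ := h
  ⟨e, he⟩

end Shift

section Expansion

/-- `y` is the expansion of `x` under `a ↦ a d`, with the `k`-th letter of `x` sitting at
position `p k` of `y`. Compared with `ExpandsTo`, the function `p` is explicit and its value at `0`
is not normalized, so that the notion is stable under reindexing `x` and under shifting `y`. -/
structure ExpandsAlong (a d : ℕ) (x : Seq) (p : ℤ → ℤ) (y : Seq) : Prop where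
  position_succ : ∀ k, p (k + 1) = p k + if x k = a then 2 else 1
  apply_position : ∀ k, y (p k) = x k
  apply_position_add_one : ∀ k, x k = a → y (p k + 1) = d

variable {a d : ℕ} {x y : Seq} {p : ℤ → ℤ}

lemma expandsTo_iff_exists_expandsAlong :
    ExpandsTo a d x y ↔ ∃ p : ℤ → ℤ, (p 0 = 0 ∨ p 0 = -1) ∧ ExpandsAlong a d x p y :=
  ⟨fun ⟨p, h0, h1, h2, h3⟩ => ⟨p, h0, h1, h2, h3⟩, fun ⟨p, h0, h1, h2, h3⟩ => ⟨p, h0, h1, h2, h3⟩⟩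

namespace ExpandsAlong

lemma exists_position (h : ExpandsAlong a d x p y) (i : ℤ) :
    ∃ k, p k = i ∨ (p k + 1 = i ∧ x k = a) := by
  induction i using Int.inductionOn' (b := p 0) with
  | zero => exact ⟨0, Or.inl rfl⟩
  | succ j _ ih =>
    obtain ⟨k, hk | ⟨hk, hxk⟩⟩ := ih
    · by_cases hxk : x k = a
      · exact ⟨k, Or.inr ⟨by rw [hk], hxk⟩⟩
      · exact ⟨k + 1, Or.inl (by rw [h.position_succ, if_neg hxk, hk])⟩
    · exact ⟨k + 1, Or.inl (by rw [h.position_succ, if_pos hxk]; omega)⟩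
  | pred j _ ih =>
    obtain ⟨k, hk | ⟨hk, -⟩⟩ := ih
    · have hstep := h.position_succ (k - 1)
      rw [sub_add_cancel] at hstep
      by_cases hxk : x (k - 1) = a
      · rw [if_pos hxk] at hstep
        exact ⟨k - 1, Or.inr ⟨by omega, hxk⟩⟩
      · rw [if_neg hxk] at hstep
        exact ⟨k - 1, Or.inl (by omega)⟩
    · exact ⟨k, Or.inl (by omega)⟩

lemma apply_mem_insert_range (h : ExpandsAlong a d x p y) (i : ℤ) :
    y i ∈ insert d (Set.range x) := by
  obtain ⟨k, rfl | ⟨rfl, hk⟩⟩ := h.exists_position i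
  · exact Or.inr ⟨k, (h.apply_position k).symm⟩
  · exact Or.inl (h.apply_position_add_one k hk)

lemma apply_add_one_eq_iff (h : ExpandsAlong a d x p y) (hx : ∀ k, x k ≠ d) (i : ℤ) :
    y (i + 1) = d ↔ y i = a := by
  obtain ⟨k, rfl | ⟨rfl, hk⟩⟩ := h.exists_position i
  · rw [h.apply_position]
    refine ⟨fun hd => by_contra fun hk => hx (k + 1) ?_, h.apply_position_add_one k⟩
    rw [← h.apply_position, h.position_succ, if_neg hk, hd]
  · have hnext : p k + 1 + 1 = p (k + 1) := by rw [h.position_succ, if_pos hk]; ring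
    rw [hnext, h.apply_position, h.apply_position_add_one k hk]
    exact ⟨fun hd => absurd hd (hx _), fun hd => absurd (hk.trans hd.symm) (hx k)⟩

lemma translate (h : ExpandsAlong a d x p y) (m : ℤ) :
    ExpandsAlong a d (fun k => x (k + m)) (fun k => p (k + m)) y where
  position_succ k := by
    rw [← h.position_succ, add_right_comm]
  apply_position k := h.apply_position (k + m)
  apply_position_add_one k := h.apply_position_add_one (k + m)

lemma abs_position_sub_le (h : ExpandsAlong a d x p y) (k : ℤ) : |p k - p 0| ≤ 2 * |k| := by
  have hstep (k : ℤ) : p k + 1 ≤ p (k + 1) ∧ p (k + 1) ≤ p k + 2 := by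
    rw [h.position_succ]
    split_ifs <;> omega
  simp only [Int.abs_eq_natAbs]
  induction k using Int.induction_on with
  | zero => simp
  | succ j ih =>
    have := hstep j
    omega
  | pred j ih =>
    have := hstep (-j - 1)
    rw [sub_add_cancel] at this
    omega

lemma normalized_iff_position_mem_Icc (h : ExpandsAlong a d x p y) :
    (p 0 = 0 ∨ p 0 = -1) ↔ ∀ k, p k ∈ Set.Icc (-(2 * |k| + 1)) (2 * |k|) := by
  refine ⟨fun h0 k => ?_, fun hp => ?_⟩
  · have := abs_le.1 (h.abs_position_sub_le k)
    constructor <;> omega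
  · have := hp 0
    rw [abs_zero, Set.mem_Icc] at this
    omega

end ExpandsAlong

lemma expandsAlong_shift_iff :
    ExpandsAlong a d x p (shift y) ↔ ExpandsAlong a d x (p + 1) y where
  mp h := ⟨fun k => (congrArg (· + 1) (h.position_succ k)).trans (add_right_comm _ _ _),
    h.apply_position, h.apply_position_add_one⟩
  mpr h := ⟨fun k => add_right_cancel ((h.position_succ k).trans (add_right_comm _ _ _)),
    h.apply_position, h.apply_position_add_one⟩

lemma isClosed_setOf_expandsAlong (a d : ℕ) :
    IsClosed {t : Seq × (ℤ → ℤ) × Seq | ExpandsAlong a d t.1 t.2.1 t.2.2} := by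
  have hx (k : ℤ) : Continuous fun t : Seq × (ℤ → ℤ) × Seq => t.1 k := by fun_prop
  have hp (k : ℤ) : Continuous fun t : Seq × (ℤ → ℤ) × Seq => t.2.1 k := by fun_prop
  have heval : Continuous fun q : Seq × ℤ => q.1 q.2 :=
    continuous_prod_of_discrete_right.2 fun j => continuous_apply j
  have hy (k c : ℤ) : Continuous fun t : Seq × (ℤ → ℤ) × Seq => t.2.2 (t.2.1 k + c) :=
    heval.comp (continuous_snd.snd.prodMk ((hp k).add continuous_const))
  have hstep : Continuous fun n : ℕ => (if n = a then 2 else 1 : ℤ) :=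
    continuous_of_discreteTopology
  have hsucc (k : ℤ) := isClosed_eq (hp (k + 1)) ((hp k).add (hstep.comp (hx k)))
  have happly (k : ℤ) := isClosed_eq (hy k 0) (hx k)
  have hmarker (k : ℤ) := isClosed_imp ((isOpen_discrete {a}).preimage (hx k))
    (isClosed_eq (hy k 1) (continuous_const (y := d)))
  convert (isClosed_iInter hsucc).inter ((isClosed_iInter happly).inter (isClosed_iInter hmarker))
  ext t
  simp only [Set.mem_inter_iff, Set.mem_iInter, add_zero]
  exact ⟨fun ⟨h1, h2, h3⟩ => ⟨h1, h2, h3⟩, fun ⟨h1, h2, h3⟩ => ⟨h1, h2, h3⟩⟩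

end Expansion

section SymbolExpansion

variable {A : Set ℕ} {X : Set Seq} {a d : ℕ}

lemma mem_symbolExpansion_iff (hX : ∀ x, x ∈ X ↔ shift x ∈ X) {y : Seq} :
    y ∈ symbolExpansion X a d ↔ ∃ x ∈ X, ∃ p, ExpandsAlong a d x p y := by
  simp only [symbolExpansion, expandsTo_iff_exists_expandsAlong]
  refine ⟨fun ⟨x, hx, p, _, h⟩ => ⟨x, hx, p, h⟩, fun ⟨x, hx, p, h⟩ => ?_⟩
  -- Renumber the letters of `x` so that the one covering position `0` of `y` gets index `0`.
  obtain ⟨m, hm⟩ := h.exists_position 0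
  refine ⟨_, translate_mem hX hx m, _, ?_, h.translate m⟩
  rw [zero_add]
  omega

lemma apply_mem_of_mem_symbolExpansion (hXA : ∀ x ∈ X, ∀ i, x i ∈ A) {y : Seq}
    (hy : y ∈ symbolExpansion X a d) (i : ℤ) : y i ∈ insert d A := by
  obtain ⟨x, hx, hxy⟩ := hy
  obtain ⟨p, -, h⟩ := expandsTo_iff_exists_expandsAlong.1 hxy
  exact Set.insert_subset_insert (Set.range_subset_iff.2 (hXA x hx)) (h.apply_mem_insert_range i)

lemma apply_add_one_eq_iff_of_mem_symbolExpansion (hXd : ∀ x ∈ X, ∀ i, x i ≠ d) {y : Seq}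
    (hy : y ∈ symbolExpansion X a d) (i : ℤ) : y (i + 1) = d ↔ y i = a := by
  obtain ⟨x, hx, hxy⟩ := hy
  obtain ⟨p, -, h⟩ := expandsTo_iff_exists_expandsAlong.1 hxy
  exact h.apply_add_one_eq_iff (hXd x hx) i

lemma shift_mem_symbolExpansion_iff (hX : ∀ x, x ∈ X ↔ shift x ∈ X) (y : Seq) :
    y ∈ symbolExpansion X a d ↔ shift y ∈ symbolExpansion X a d := by
  rw [mem_symbolExpansion_iff hX, mem_symbolExpansion_iff hX]
  refine exists_congr fun x => and_congr_right fun _ => ?_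
  exact (Equiv.addRight 1).surjective.exists.trans
    (exists_congr fun p => expandsAlong_shift_iff.symm)

lemma isClosed_symbolExpansion (hA : A.Finite) (hX : IsClosed X) (hXA : ∀ x ∈ X, ∀ i, x i ∈ A) :
    IsClosed (symbolExpansion X a d) := by
  let S : Set (Seq × (ℤ → ℤ) × Seq) := X ×ˢ
    (Set.univ.pi fun k => Set.Icc (-(2 * |k| + 1)) (2 * |k|)) ×ˢ (Set.univ.pi fun _ => insert d A)
  have hS : IsCompact S := (isCompact_of_finite_alphabet hA hX hXA).prod
    ((isCompact_univ_pi fun _ => isCompact_Icc).prod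
      (isCompact_univ_pi fun _ => (hA.insert d).isCompact))
  have hproj : symbolExpansion X a d =
      (fun t => t.2.2) '' (S ∩ {t | ExpandsAlong a d t.1 t.2.1 t.2.2}) := by
    ext y
    constructor
    · intro hy
      have hyA := apply_mem_of_mem_symbolExpansion hXA hy
      obtain ⟨x, hx, hxy⟩ := hy
      obtain ⟨p, h0, h⟩ := expandsTo_iff_exists_expandsAlong.1 hxy
      have hp := h.normalized_iff_position_mem_Icc.1 h0
      exact ⟨(x, p, y), ⟨⟨hx, fun k _ => hp k, fun i _ => hyA i⟩, h⟩, rfl⟩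
    · rintro ⟨⟨x, p, y⟩, ⟨⟨hx, hp, -⟩, h⟩, rfl⟩
      have h0 := h.normalized_iff_position_mem_Icc.2 fun k => hp k trivial
      exact ⟨x, hx, expandsTo_iff_exists_expandsAlong.2 ⟨p, h0, h⟩⟩
  rw [hproj]
  exact ((hS.inter_right (isClosed_setOf_expandsAlong a d)).image continuous_snd.snd).isClosed

lemma isSubshift_symbolExpansion (hX : IsSubshift A X) :
    IsSubshift (insert d A) (symbolExpansion X a d) :=
  let ⟨hA, hclosed, hinv, hXA⟩ := hX
  ⟨hA.insert d, isClosed_symbolExpansion hA hclosed hXA, shift_mem_symbolExpansion_iff hinv,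
    fun _ hy => apply_mem_of_mem_symbolExpansion hXA hy⟩

end SymbolExpansion

section MergeCode

/-- The 1-block code sending `d` to `b` and fixing all other letters. -/
def mergeCode (d b : ℕ) (y : Seq) : Seq := fun i => if y i = d then b else y i

/-- The 2-block code replacing the letter after each occurrence of `a` by `d`; it recovers a point
of the expansion under `a ↦ a d` from its image under `mergeCode`. -/
def splitCode (a d : ℕ) (z : Seq) : Seq := fun i => if z (i - 1) = a then d else z i

lemma continuous_mergeCode (d b : ℕ) : Continuous (mergeCode d b) :=
  continuous_pi fun i => (continuous_of_discreteTopology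
    (f := fun n : ℕ => if n = d then b else n)).comp (continuous_apply i)

lemma continuous_splitCode (a d : ℕ) : Continuous (splitCode a d) :=
  continuous_pi fun i => (continuous_of_discreteTopology
    (f := fun q : ℕ × ℕ => if q.1 = a then d else q.2)).comp
      ((continuous_apply (i - 1)).prodMk (continuous_apply (A := fun _ => ℕ) i))

lemma shift_mergeCode (d b : ℕ) (y : Seq) : shift (mergeCode d b y) = mergeCode d b (shift y) :=
  rfl

variable {A : Set ℕ} {X : Set Seq} {a b d : ℕ}

lemma mergeCode_apply_mem {y : Seq} {i : ℤ} (hy : y i ∈ insert d A) :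
    mergeCode d b y i ∈ insert b A := by
  by_cases h : y i = d
  · exact Or.inl (if_pos h)
  · rw [mergeCode, if_neg h]
    exact Or.inr (hy.resolve_left h)

lemma mergeCode_apply_eq_iff (hab : a ≠ b) (had : a ≠ d) {y : Seq} {i : ℤ} :
    mergeCode d b y i = a ↔ y i = a := by
  by_cases h : y i = d
  · rw [mergeCode, if_pos h, h]
    exact iff_of_false hab.symm had.symm
  · rw [mergeCode, if_neg h]

lemma splitCode_mergeCode (hab : a ≠ b) (had : a ≠ d) {y : Seq}
    (hy : ∀ i, y (i + 1) = d ↔ y i = a) : splitCode a d (mergeCode d b y) = y := by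
  funext i
  have hi : y i = d ↔ y (i - 1) = a := by simpa only [sub_add_cancel] using hy (i - 1)
  by_cases h : y i = d
  · rw [splitCode, if_pos ((mergeCode_apply_eq_iff hab had).2 (hi.1 h)), h]
  · rw [splitCode, if_neg (mt (mergeCode_apply_eq_iff hab had).1 (mt hi.2 h)), mergeCode, if_neg h]

lemma isSubshift_image_mergeCode (hX : IsSubshift (insert d A) X) :
    IsSubshift (insert b A) (mergeCode d b '' X) :=
  hX.image (continuous_mergeCode d b) (shift_mergeCode d b)
    ((hX.1.subset (Set.subset_insert d A)).insert b) fun y hy i =>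
      mergeCode_apply_mem (hX.2.2.2 y hy i)

lemma conjugacyVia_mergeCode (hXd : ∀ x ∈ X, ∀ i, x i ≠ d) (hab : a ≠ b) (had : a ≠ d) :
    ConjugacyVia (mergeCode d b) (symbolExpansion X a d)
      (mergeCode d b '' symbolExpansion X a d) :=
  conjugacyVia_image_of_leftInvOn (continuous_mergeCode d b) (continuous_splitCode a d)
    (shift_mergeCode d b) fun _ hy =>
      splitCode_mergeCode hab had (apply_add_one_eq_iff_of_mem_symbolExpansion hXd hy)

end MergeCode

theorem statement0_general {A : Set ℕ} {X : Set Seq} (hX : IsSubshift A X) {a b d : ℕ} (ha : a ∈ A)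
    (hab : a ≠ b) (hd : d ∉ A) :
    FlowEquiv X (mergeCode d b '' symbolExpansion X a d) ∧
      ConjugacyVia (mergeCode d b) (symbolExpansion X a d)
        (mergeCode d b '' symbolExpansion X a d) := by
  have hXd : ∀ x ∈ X, ∀ i, x i ≠ d := fun x hx i => ne_of_mem_of_not_mem (hX.2.2.2 x hx i) hd
  have hexp : IsSubshift (insert d A) (symbolExpansion X a d) := isSubshift_symbolExpansion hX
  have hconj := conjugacyVia_mergeCode hXd hab (ne_of_mem_of_not_mem ha hd)
  have hflow : FlowEquiv (symbolExpansion X a d) (mergeCode d b '' symbolExpansion X a d) :=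
    .of_conjugate ⟨_, hexp⟩ ⟨_, isSubshift_image_mergeCode hexp⟩ hconj.conjugate
  exact ⟨(FlowEquiv.expand a d hX ha hd).trans hflow, hconj⟩

/-- Let `X` be a shift space over a finite alphabet `A` and
`a ≠ b ∈ A`.  Then `X` is flow equivalent to `X^{a ↦ ab}`; moreover the 1-block
code fixing every letter of `A` and sending `◇` to `b` restricts to a conjugacy
from `X^{a ↦ a◇}` onto `X^{a ↦ ab}`. -/
theorem statement0 (A : Set ℕ) (X : Set Seq) (hX : IsSubshift A X)
    (a b : ℕ) (ha : a ∈ A) (hb : b ∈ A) (hab : a ≠ b) (d : ℕ) (hd : d ∉ A) :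
    FlowEquiv X ((fun y : Seq => fun i => if y i = d then b else y i) ''
        symbolExpansion X a d) ∧
      ConjugacyVia (fun y : Seq => fun i => if y i = d then b else y i)
        (symbolExpansion X a d)
        ((fun y : Seq => fun i => if y i = d then b else y i) ''
          symbolExpansion X a d) :=
  statement0_general hX ha hab hd

end SymbolicDynamics
end

section
/- Let β > 1 with g(β) eventually periodic, say g(β) = g₁⋯g_n(g_{n+1}⋯g_{n+p})^∞ with n, p ∈ ℕ minimal, let (F_β, 𝓛_β) be the right Fischer cover of X_β (the explicit labelled graph with vertices v₁,…,v_{n+p}; for each 1 ≤ i ≤ n+p and 0 ≤ k < g_i an edge labelled k from v_i to v₁; for 1 ≤ i < n+p an edge labelled g_i from v_i to v_{i+1}; and an edge labelled g_{n+p} from v_{n+p} to v_{n+1}), and let π : X_{F_β} → X_β be the covering map sending a biinfinite edge path λ to its label sequence (𝓛_β(λ_i))_{i∈ℤ}. If g(β) is periodic, then π is bijective (1-to-1). If g(β) is eventually periodic but not periodic, then π is surjective, every fiber π^{−1}(x) has at most 2 elements, and some fiber has exactly 2 elements (π is 2-to-1). -/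
namespace SymbolicDynamics

/-! ### Labelled graphs and sofic shifts -/

/-- A labelled directed graph over the ambient alphabet `ℕ`. -/
structure LGraph where
  V : Type
  E : Type
  src : E → V
  tgt : E → V
  lab : E → ℕ

namespace LGraph

/-- Biinfinite edge paths in `G`. -/
def paths (G : LGraph) : Set (ℤ → G.E) := {e | ∀ i : ℤ, G.tgt (e i) = G.src (e (i + 1))}

/-- The label sequence of a biinfinite edge path. -/
def labelMap (G : LGraph) (e : ℤ → G.E) : Seq := fun i => G.lab (e i)

/-- The shift space presented by the labelled graph `G`: label sequences of
biinfinite edge paths. -/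
def presents (G : LGraph) : Set Seq := {y | ∃ e ∈ G.paths, G.labelMap e = y}

/-- No vertex emits two distinct edges with the same label. -/
def RightResolving (G : LGraph) : Prop :=
  ∀ e f : G.E, G.src e = G.src f → G.lab e = G.lab f → e = f

/-- The graph is strongly connected (irreducible). -/
def StronglyConnected (G : LGraph) : Prop :=
  ∀ u v : G.V, Relation.ReflTransGen (fun a b => ∃ e : G.E, G.src e = a ∧ G.tgt e = b) u v

/-- The follower set of a vertex: label sequences of right-infinite paths
starting at that vertex. -/
def follower (G : LGraph) (v : G.V) : Set (ℕ → ℕ) :=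
  {y | ∃ e : ℕ → G.E, G.src (e 0) = v ∧ (∀ i : ℕ, G.tgt (e i) = G.src (e (i + 1))) ∧
    ∀ i : ℕ, y i = G.lab (e i)}

/-- Distinct vertices have distinct follower sets. -/
def FollowerSeparated (G : LGraph) : Prop :=
  ∀ u v : G.V, G.follower u = G.follower v → u = v

end LGraph

/-- A shift space is sofic iff it is presented by some finite labelled graph. -/
def IsSofic (X : Set Seq) : Prop :=
  ∃ G : LGraph, Finite G.V ∧ Finite G.E ∧ G.presents = X

/-! ### Beta-shifts -/

/-- `betaR β t n` is `rₙ(t)`: `r₀(t) = t`, `r_{n+1}(t) = frac (β · rₙ(t))`. -/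
noncomputable def betaR (β t : ℝ) : ℕ → ℝ
  | 0 => t
  | n + 1 => Int.fract (β * betaR β t n)

/-- `betaDigit β t n` is the digit `x_{n+1}(t) = ⌊β · rₙ(t)⌋` of the
β-expansion of `t` (0-based indexing). -/
noncomputable def betaDigit (β t : ℝ) (n : ℕ) : ℕ := (⌊β * betaR β t n⌋).toNat

/-- `g` is the generating sequence `g(β)` (with 0-based indexing,
`g i = g_{i+1}`): it equals the β-expansion `e(β)` of `1` if the latter is not
eventually zero, and equals `(a₁ ⋯ a_{k-1} (a_k - 1))^∞` if
`e(β) = a₁ ⋯ a_k 0 0 ⋯` with `a_k ≠ 0`. -/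
def IsGenSeq (β : ℝ) (g : ℕ → ℕ) : Prop :=
  ((¬ ∃ N : ℕ, ∀ n ≥ N, betaDigit β 1 n = 0) ∧ g = betaDigit β 1) ∨
  (∃ k : ℕ, betaDigit β 1 k ≠ 0 ∧ (∀ n > k, betaDigit β 1 n = 0) ∧
    ∀ n : ℕ, g n = if n % (k + 1) = k then betaDigit β 1 k - 1
      else betaDigit β 1 (n % (k + 1)))

/-- The words `xₙ(t) x_{n+1}(t) ⋯ x_m(t)` (`t ∈ [0,1]`, `1 ≤ n ≤ m`) of the
beta-shift. -/
def betaWords (β : ℝ) : Set (List ℕ) :=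
  {w | ∃ t ∈ Set.Icc (0 : ℝ) 1, ∃ n₀ m : ℕ,
    w = List.ofFn fun j : Fin m => betaDigit β t (n₀ + (j : ℕ))}

/-- The beta-shift `X_β`: the shift space whose language is `betaWords β`. -/
def betaShift (β : ℝ) : Set Seq := {x | ∀ (i : ℤ) (m : ℕ), wordAt x i m ∈ betaWords β}

/-- The labelled graph with vertices `v₁, …, v_{n+p}` (encoded as `Fin (n+p)`);
for each `1 ≤ i ≤ n+p` and each `0 ≤ k < g_i`, an edge labelled `k` from `v_i`
to `v₁`; for each `1 ≤ i < n+p`, an edge labelled `g_i` from `v_i` to `v_{i+1}`;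
and an edge labelled `g_{n+p}` from `v_{n+p}` to `v_{n+1}`.  (Here `g` is
0-based: `g i = g_{i+1}`.) -/
def betaGraph (n p : ℕ) (hp : 0 < p) (g : ℕ → ℕ) : LGraph where
  V := Fin (n + p)
  E := (Σ i : Fin (n + p), Fin (g (i : ℕ))) ⊕ Fin (n + p)
  src := Sum.elim (fun e => e.1) fun i => i
  tgt := Sum.elim (fun _ => ⟨0, by omega⟩) fun i =>
    if h : (i : ℕ) + 1 < n + p then ⟨(i : ℕ) + 1, h⟩ else ⟨n, by omega⟩
  lab := Sum.elim (fun e => (e.2 : ℕ)) fun i => g (i : ℕ)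

/-!
Each vertex `v_i` of the cover carries a remainder `ρ_i ∈ (0, 1]` of the expansion `g` of `1`, and
reading the same letter from two vertices preserves the order of their remainders. Two paths with
the same labels are therefore comparable at all times, and if they differ then the lower one can
never have returned to `v₁` before they separate: its past follows only edges of maximal label, that
is, it runs around the cycle. Two such pasts with the same labels coincide, since the difference of
their remainders is multiplied by `β` at each step but takes only finitely many values. So a fibre
contains at most one path without a maximal past and at most one with, hence at most two in all.

If `g` is periodic, the cycle passes through a vertex of remainder `1`, above which there is
nothing, and fibres are singletons. Otherwise all remainders on the cycle are less than `1`; the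
paths which start at `v₁` earlier and earlier and read the labels of the cycle stay strictly above
it, and a limit of them is a second preimage.
-/

open Filter

/-! ### Beta-expansions -/

lemma betaR_add (β t : ℝ) (a b : ℕ) : betaR β t (a + b) = betaR β (betaR β t a) b := by
  induction b with
  | zero => rfl
  | succ b ih => rw [← add_assoc, betaR, ih, betaR]

lemma betaDigit_add (β t : ℝ) (a b : ℕ) :
    betaDigit β t (a + b) = betaDigit β (betaR β t a) b := by
  rw [betaDigit, betaDigit, betaR_add]

lemma betaR_nonneg (β : ℝ) {t : ℝ} (ht : 0 ≤ t) : ∀ k, 0 ≤ betaR β t k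
  | 0 => ht
  | _ + 1 => Int.fract_nonneg _

lemma betaR_lt_one (β : ℝ) {t : ℝ} (ht : t < 1) : ∀ k, betaR β t k < 1
  | 0 => ht
  | _ + 1 => Int.fract_lt_one _

lemma betaR_le_one (β : ℝ) {t : ℝ} (ht : t ≤ 1) : ∀ k, betaR β t k ≤ 1
  | 0 => ht
  | _ + 1 => (Int.fract_lt_one _).le

lemma betaR_succ {β t : ℝ} (hβ : 0 ≤ β) (ht : 0 ≤ t) (k : ℕ) :
    betaR β t (k + 1) = β * betaR β t k - betaDigit β t k := by
  have hfloor : 0 ≤ ⌊β * betaR β t k⌋ := Int.floor_nonneg.2 (mul_nonneg hβ (betaR_nonneg β ht k))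
  have hdigit : (betaDigit β t k : ℝ) = ⌊β * betaR β t k⌋ := by
    rw [betaDigit, ← Int.cast_natCast, Int.toNat_of_nonneg hfloor]
  rw [hdigit, betaR, Int.fract]

lemma betaDigit_eq_zero_of_betaR_eq_zero {β t : ℝ} {k m : ℕ} (h : betaR β t k = 0)
    (hkm : k ≤ m) : betaDigit β t m = 0 := by
  have hzero : ∀ j, betaR β 0 j = 0 := fun j => by
    induction j with
    | zero => rfl
    | succ j ih => rw [betaR, ih, mul_zero, Int.fract_zero]
  obtain ⟨j, rfl⟩ := Nat.exists_eq_add_of_le hkm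
  rw [betaDigit_add, h, betaDigit, hzero, mul_zero, Int.floor_zero, Int.toNat_zero]

lemma betaR_div_one {β t : ℝ} (hβ : β ≠ 0) (ht₀ : 0 ≤ t) (ht₁ : t < 1) (a : ℕ) :
    betaR β ((t + a) / β) 1 = t := by
  rw [betaR, betaR, mul_div_cancel₀ _ hβ, Int.fract_add_natCast, Int.fract_eq_self.2 ⟨ht₀, ht₁⟩]

lemma betaDigit_div_zero {β t : ℝ} (hβ : β ≠ 0) (ht₀ : 0 ≤ t) (ht₁ : t < 1) (a : ℕ) :
    betaDigit β ((t + a) / β) 0 = a := by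
  rw [betaDigit, betaR, mul_div_cancel₀ _ hβ, Int.floor_add_natCast,
    Int.floor_eq_zero_iff.2 ⟨ht₀, ht₁⟩, zero_add, Int.toNat_natCast]

lemma eq_zero_of_succ_eq_mul_of_bounded {β C : ℝ} (hβ : 1 < β) {u : ℕ → ℝ}
    (hu : ∀ m, u (m + 1) = β * u m) (hC : ∀ m, |u m| ≤ C) : u 0 = 0 := by
  by_contra hne
  have htop : Tendsto (fun m => |u m|) atTop atTop :=
    tendsto_atTop_of_geom_le (abs_pos.2 hne) hβ fun m => by
      rw [hu, abs_mul, abs_of_pos (zero_lt_one.trans hβ)]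
  obtain ⟨m, hm⟩ := (htop.eventually_gt_atTop C).exists
  exact (hC m).not_gt hm

lemma eq_zero_of_eq_mul_succ_of_finite_range {β : ℝ} (hβ : 1 < β) {u : ℕ → ℝ}
    (hu : ∀ m, u m = β * u (m + 1)) (hfin : (Set.range u).Finite) : u 0 = 0 := by
  by_contra hne
  have hne' : ∀ m, u m ≠ 0 := fun m => by
    induction m with
    | zero => exact hne
    | succ m ih => exact right_ne_zero_of_mul (hu m ▸ ih)
  have hanti : StrictAnti fun m => |u m| := strictAnti_nat_of_succ_lt fun m => by
    rw [hu m, abs_mul, abs_of_pos (zero_lt_one.trans hβ)]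
    exact lt_mul_of_one_lt_left (abs_pos.2 (hne' _)) hβ
  have hinj : Function.Injective u := fun a b hab => hanti.injective (congrArg abs hab)
  exact Set.infinite_range_of_injective hinj hfin

lemma eq_zero_of_betaDigit_eq_zero {β t : ℝ} (hβ : 1 < β) (ht₀ : 0 ≤ t) (ht₁ : t ≤ 1)
    (h : ∀ m, betaDigit β t m = 0) : t = 0 := by
  refine eq_zero_of_succ_eq_mul_of_bounded (u := betaR β t) (C := 1) hβ (fun m => ?_) fun m => ?_
  · rw [betaR_succ (by linarith) ht₀, h, Nat.cast_zero, sub_zero]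
  · rw [abs_of_nonneg (betaR_nonneg β ht₀ m)]
    exact betaR_le_one β ht₁ m

/-! ### Remainders of the generating sequence -/

/-- `ρ` is the sequence of remainders of the quasi-greedy expansion `g` of `1` in base `β`. In
contrast to the greedy remainders `betaR`, they lie in `(0, 1]`. -/
structure IsRemainderSeq (β : ℝ) (g : ℕ → ℕ) (ρ : ℕ → ℝ) : Prop where
  zero : ρ 0 = 1
  pos : ∀ k, 0 < ρ k
  le_one : ∀ k, ρ k ≤ 1
  succ : ∀ k, ρ (k + 1) = β * ρ k - g k

lemma isRemainderSeq_betaR {β : ℝ} (hβ : 0 ≤ β) (h : ¬ ∃ N, ∀ n ≥ N, betaDigit β 1 n = 0) :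
    IsRemainderSeq β (betaDigit β 1) (betaR β 1) where
  zero := rfl
  pos k := (betaR_nonneg β zero_le_one k).lt_of_ne' fun h₀ =>
    h ⟨k, fun _ => betaDigit_eq_zero_of_betaR_eq_zero h₀⟩
  le_one := betaR_le_one β le_rfl
  succ := betaR_succ hβ zero_le_one

/-- Lowering the last nonzero digit of a finite expansion by one replaces the remainder `0` after
it by `1`, where the expansion starts over. -/
lemma isRemainderSeq_betaR_mod {β : ℝ} (hβ : 1 < β) {g : ℕ → ℕ} {k : ℕ} (hk : betaDigit β 1 k ≠ 0)
    (hk' : ∀ n > k, betaDigit β 1 n = 0)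
    (hg : ∀ n, g n = if n % (k + 1) = k then betaDigit β 1 k - 1 else betaDigit β 1 (n % (k + 1))) :
    IsRemainderSeq β g fun m => betaR β 1 (m % (k + 1)) where
  zero := by rw [Nat.zero_mod, betaR]
  pos m := (betaR_nonneg β zero_le_one _).lt_of_ne' fun h₀ => hk <|
    betaDigit_eq_zero_of_betaR_eq_zero h₀ (Nat.lt_succ_iff.1 (Nat.mod_lt m k.succ_pos))
  le_one m := betaR_le_one β le_rfl _
  succ m := by
    have hsucc := betaR_succ (by linarith : 0 ≤ β) zero_le_one (m % (k + 1))
    have hmod : m % (k + 1) < k + 1 := Nat.mod_lt m k.succ_pos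
    rw [hg]
    split_ifs with hlast
    · have hzero : betaR β 1 (k + 1) = 0 :=
        eq_zero_of_betaDigit_eq_zero hβ (betaR_nonneg β zero_le_one _) (betaR_le_one β le_rfl _)
          fun j => by rw [← betaDigit_add]; exact hk' _ (by omega)
      have hnext : (m + 1) % (k + 1) = 0 := by rw [← Nat.mod_add_mod, hlast, Nat.mod_self]
      rw [hlast, hzero] at hsucc
      rw [hlast, hnext, betaR, Nat.cast_sub (Nat.one_le_iff_ne_zero.2 hk), Nat.cast_one]
      linarith
    · rw [← Nat.mod_add_mod, Nat.mod_eq_of_lt (by omega : m % (k + 1) + 1 < k + 1), hsucc]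

lemma IsGenSeq.exists_isRemainderSeq {β : ℝ} (hβ : 1 < β) {g : ℕ → ℕ} (hg : IsGenSeq β g) :
    ∃ ρ, IsRemainderSeq β g ρ := by
  rcases hg with ⟨hne, rfl⟩ | ⟨k, hk, hk', hg⟩
  · exact ⟨_, isRemainderSeq_betaR (by linarith) hne⟩
  · exact ⟨_, isRemainderSeq_betaR_mod hβ hk hk' hg⟩

lemma add_one_eq_natCeil_of_sub_mem_Ioc {x : ℝ} {a : ℕ} (h : x - a ∈ Set.Ioc (0 : ℝ) 1) :
    a + 1 = ⌈x⌉₊ := by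
  refine ((Nat.ceil_eq_iff a.add_one_ne_zero).2 ⟨?_, ?_⟩).symm
  · rw [Nat.add_sub_cancel]
    linarith [h.1]
  · rw [Nat.cast_add, Nat.cast_one]
    linarith [h.2]

namespace IsRemainderSeq

variable {β : ℝ} {g : ℕ → ℕ} {ρ : ℕ → ℝ}

lemma digit_add_one (h : IsRemainderSeq β g ρ) (k : ℕ) : g k + 1 = ⌈β * ρ k⌉₊ :=
  add_one_eq_natCeil_of_sub_mem_Ioc (by rw [← h.succ]; exact ⟨h.pos _, h.le_one _⟩)

lemma digit_eq_of_eq (h : IsRemainderSeq β g ρ) {a b : ℕ} (hab : ρ a = ρ b) : g a = g b :=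
  Nat.succ_injective (by rw [Nat.succ_eq_add_one, h.digit_add_one, hab, ← h.digit_add_one])

lemma add_eq_add (h : IsRemainderSeq β g ρ) {a b : ℕ} (hab : ρ a = ρ b) (m : ℕ) :
    ρ (a + m) = ρ (b + m) := by
  induction m with
  | zero => exact hab
  | succ m ih => rw [← add_assoc, ← add_assoc, h.succ, h.succ, ih, h.digit_eq_of_eq ih]

lemma eq_iff (h : IsRemainderSeq β g ρ) (hβ : 1 < β) {a b : ℕ} :
    ρ a = ρ b ↔ ∀ m, g (a + m) = g (b + m) := by
  refine ⟨fun hab m => h.digit_eq_of_eq (h.add_eq_add hab m), fun hab => sub_eq_zero.1 ?_⟩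
  refine eq_zero_of_succ_eq_mul_of_bounded (u := fun m => ρ (a + m) - ρ (b + m)) (C := 1) hβ
    (fun m => ?_) fun m => ?_
  · rw [← add_assoc, ← add_assoc, h.succ, h.succ, hab]
    ring
  · rw [abs_le]
    constructor <;> linarith [h.pos (a + m), h.pos (b + m), h.le_one (a + m), h.le_one (b + m)]

lemma periodic_of_eq_one (h : IsRemainderSeq β g ρ) {k : ℕ} (hk : ρ k = 1) :
    Function.Periodic g k := fun i => by
  rw [add_comm, h.digit_eq_of_eq (h.add_eq_add (hk.trans h.zero.symm) i), zero_add]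

lemma periodic (h : IsRemainderSeq β g ρ) (hβ : 1 < β) {p : ℕ} (hg : Function.Periodic g p) :
    Function.Periodic ρ p := fun i =>
  (h.eq_iff hβ).2 fun m => by rw [add_right_comm, hg]

lemma injOn_Ico (h : IsRemainderSeq β g ρ) {p : ℕ}
    (hpmin : ∀ p' : ℕ, 0 < p' → (∃ n' : ℕ, ∀ i ≥ n', g (i + p') = g i) → p ≤ p') (n : ℕ) :
    Set.InjOn ρ (Set.Ico n (n + p)) := by
  have hle : ∀ a ≥ n, ∀ b < n + p, ρ a = ρ b → b ≤ a := by
    intro a ha b hb hab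
    by_contra! hlt
    have hper : ∀ i ≥ a, g (i + (b - a)) = g i := fun i hi => by
      have := h.digit_eq_of_eq (h.add_eq_add hab (i - a))
      rw [show a + (i - a) = i by omega, show b + (i - a) = i + (b - a) by omega] at this
      exact this.symm
    have := hpmin (b - a) (by omega) ⟨a, hper⟩
    omega
  exact fun a ha b hb hab =>
    le_antisymm (hle b hb.1 a ha.2 hab.symm) (hle a ha.1 b hb.2 hab)

end IsRemainderSeq

lemma periodic_of_eventually_periodic {α : Type*} {g : ℕ → α} {n p q : ℕ} (hq : 0 < q)
    (hgq : Function.Periodic g q) (hgp : ∀ i ≥ n, g (i + p) = g i) : Function.Periodic g p :=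
  fun i => by
  have hgn : Function.Periodic g (n * q) := hgq.nat_mul n
  rw [← hgn (i + p), add_right_comm, hgp _ (le_add_left (Nat.le_mul_of_pos_right n hq)), hgn]

/-! ### Paths in labelled graphs -/

namespace LGraph

variable {G : LGraph}

/-- Right-infinite edge paths in `G`. -/
def rays (G : LGraph) : Set (ℕ → G.E) := {f | ∀ j, G.tgt (f j) = G.src (f (j + 1))}

lemma exists_mem_rays {Q : ℕ → G.V → Prop} {R : ℕ → G.E → Prop} {v₀ : G.V} (hv₀ : Q 0 v₀)
    (hstep : ∀ j v, Q j v → ∃ e, G.src e = v ∧ R j e ∧ Q (j + 1) (G.tgt e)) :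
    ∃ f ∈ G.rays, ∀ j, R j (f j) := by
  have : Nonempty G.E := ⟨(hstep 0 v₀ hv₀).choose⟩
  choose! next hsrc hR hQ using hstep
  let vertex : ℕ → G.V := fun j => Nat.rec v₀ (fun j v => G.tgt (next j v)) j
  have hvertex : ∀ j, Q j (vertex j) := fun j => by
    induction j with
    | zero => exact hv₀
    | succ j ih => exact hQ j _ ih
  exact ⟨fun j => next j (vertex j), fun j => (hsrc _ _ (hvertex (j + 1))).symm,
    fun j => hR j _ (hvertex j)⟩

/-- Compactness of the path space of a finite graph. -/
lemma exists_mem_paths_of_rays [Finite G.E] {P : ℤ → G.E → Prop}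
    (h : ∀ N : ℕ, ∃ f ∈ G.rays, ∀ j ≤ 2 * N, P (j - N) (f j)) : ∃ e ∈ G.paths, ∀ i, P i (e i) := by
  choose f hf hP using h
  let U : Ultrafilter ℕ := hyperfilter ℕ
  have hlim : ∀ i : ℤ, ∃ e, ∀ᶠ N in (U : Filter ℕ), f N (i + N).toNat = e := fun i => by
    obtain ⟨e, he⟩ := Ultrafilter.eq_pure_of_finite (U.map fun N => f N (i + N).toNat)
    exact ⟨e, Ultrafilter.mem_map.1 (he ▸ Set.mem_singleton e : {e} ∈ U.map _)⟩
  choose e he using hlim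
  have hlarge : ∀ i : ℤ, ∀ᶠ N : ℕ in (U : Filter ℕ), i.natAbs ≤ N := fun i =>
    Nat.hyperfilter_le_atTop (eventually_ge_atTop i.natAbs)
  refine ⟨e, fun i => ?_, fun i => ?_⟩
  · obtain ⟨N, hi, hi', hN⟩ := ((he i).and ((he (i + 1)).and (hlarge i))).exists
    rw [← hi, ← hi', hf N, show (i + 1 + N).toNat = (i + N).toNat + 1 by omega]
  · obtain ⟨N, hi, hN⟩ := ((he i).and (hlarge i)).exists
    have hPN := hP N (i + N).toNat (by omega)
    rwa [hi, show (((i + N).toNat : ℕ) : ℤ) - N = i by omega] at hPN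

lemma RightResolving.eq_of_src_eq (hG : G.RightResolving) {e₁ e₂ : ℤ → G.E} (h₁ : e₁ ∈ G.paths)
    (h₂ : e₂ ∈ G.paths) (hl : G.labelMap e₁ = G.labelMap e₂) {i j : ℤ} (hij : i ≤ j)
    (hi : G.src (e₁ i) = G.src (e₂ i)) : e₁ j = e₂ j := by
  induction j, hij using Int.leInduction with
  | base => exact hG _ _ hi (congrFun hl i)
  | succ j _ ih => exact hG _ _ (by rw [← h₁ j, ← h₂ j, ih]) (congrFun hl (j + 1))

/-- Before some time, the path `e` uses only edges of maximal label, where `d v` stands for the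
largest label emitted by the vertex `v`. -/
def MaximalPast (G : LGraph) (d : G.V → ℕ) (e : ℤ → G.E) : Prop :=
  ∀ᶠ j in atBot, G.lab (e j) = d (G.src (e j))

end LGraph

/-- `θ` assigns to each vertex of `G` a remainder in `(0, 1]`, and `v` emits exactly the labels
`0, …, d v`. A label below `d v` leads back to the root, which has remainder `1`, and the label
`d v` transforms the remainder as in a `β`-expansion. -/
structure IsRemainderFunction (β : ℝ) (G : LGraph) (root : G.V) (d : G.V → ℕ) (θ : G.V → ℝ) :
    Prop where
  root_eq_one : θ root = 1
  pos : ∀ v, 0 < θ v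
  le_one : ∀ v, θ v ≤ 1
  edge_cases : ∀ e, (G.lab e < d (G.src e) ∧ G.tgt e = root) ∨
    (G.lab e = d (G.src e) ∧ θ (G.tgt e) = β * θ (G.src e) - G.lab e)
  exists_edge : ∀ v, ∀ a ≤ d v, ∃ e, G.src e = v ∧ G.lab e = a

namespace IsRemainderFunction

variable {β : ℝ} {G : LGraph} {root : G.V} {d : G.V → ℕ} {θ : G.V → ℝ}

lemma tgt_eq (h : IsRemainderFunction β G root d θ) {e : G.E} (he : G.lab e = d (G.src e)) :
    θ (G.tgt e) = β * θ (G.src e) - G.lab e :=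
  ((h.edge_cases e).resolve_left fun hlt => hlt.1.ne he).2

lemma sub_digit_mem_Ioc (h : IsRemainderFunction β G root d θ) (v : G.V) :
    β * θ v - d v ∈ Set.Ioc (0 : ℝ) 1 := by
  obtain ⟨e, rfl, he⟩ := h.exists_edge v (d v) le_rfl
  rw [← he, ← h.tgt_eq he]
  exact ⟨h.pos _, h.le_one _⟩

lemma digit_add_one (h : IsRemainderFunction β G root d θ) (v : G.V) : d v + 1 = ⌈β * θ v⌉₊ :=
  add_one_eq_natCeil_of_sub_mem_Ioc (h.sub_digit_mem_Ioc v)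

lemma base_pos (h : IsRemainderFunction β G root d θ) : 0 < β := by
  have hroot := (h.sub_digit_mem_Ioc root).1
  rw [h.root_eq_one, mul_one, sub_pos] at hroot
  exact (Nat.cast_nonneg _).trans_lt hroot

lemma digit_le_digit (h : IsRemainderFunction β G root d θ) {u v : G.V} (huv : θ u ≤ θ v) :
    d u ≤ d v := by
  rw [← Nat.add_le_add_iff_right (n := 1), h.digit_add_one, h.digit_add_one]
  exact Nat.ceil_mono (mul_le_mul_of_nonneg_left huv h.base_pos.le)

/-! ### Label sequences of paths -/

lemma exists_betaDigit_eq_lab (h : IsRemainderFunction β G root d θ) {e : ℤ → G.E}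
    (he : e ∈ G.paths) (m : ℕ) (i : ℤ) :
    ∃ t, 0 ≤ t ∧ t < θ (G.src (e i)) ∧ ∀ j < m, betaDigit β t j = G.lab (e (i + j)) := by
  induction m generalizing i with
  | zero => exact ⟨0, le_rfl, h.pos _, fun j hj => absurd hj j.not_lt_zero⟩
  | succ m ih =>
    obtain ⟨t, ht₀, htθ, hdigit⟩ := ih (i + 1)
    rw [← he i] at htθ
    have ht₁ : t < 1 := htθ.trans_le (h.le_one _)
    have hβ := h.base_pos
    refine ⟨(t + G.lab (e i)) / β, by positivity, ?_, ?_⟩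
    · rw [div_lt_iff₀' hβ]
      rcases h.edge_cases (e i) with ⟨hlt, -⟩ | ⟨-, htgt⟩
      · have hlab : (G.lab (e i) : ℝ) + 1 ≤ d (G.src (e i)) := mod_cast hlt
        linarith [(h.sub_digit_mem_Ioc (G.src (e i))).1]
      · linarith
    · rintro (_ | j) hj
      · rw [betaDigit_div_zero hβ.ne' ht₀ ht₁, Nat.cast_zero, add_zero]
      · rw [add_comm j, betaDigit_add, betaR_div_one hβ.ne' ht₀ ht₁, hdigit j (by omega),
          Nat.cast_add, Nat.cast_one, add_assoc]

lemma mapsTo_betaShift (h : IsRemainderFunction β G root d θ) :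
    Set.MapsTo G.labelMap G.paths (betaShift β) := by
  intro e he i m
  obtain ⟨t, ht₀, htθ, hdigit⟩ := h.exists_betaDigit_eq_lab he m i
  refine ⟨t, ⟨ht₀, htθ.le.trans (h.le_one _)⟩, 0, m, congrArg List.ofFn (funext fun k => ?_)⟩
  rw [zero_add, hdigit k k.isLt, LGraph.labelMap]

lemma exists_ray_of_remainders (h : IsRemainderFunction β G root d θ) {r : ℕ → ℝ} {y : ℕ → ℕ}
    (hr : ∀ j, r j ∈ Set.Ico (0 : ℝ) 1) (hstep : ∀ j, r (j + 1) = β * r j - y j) :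
    ∃ f ∈ G.rays, ∀ j, G.lab (f j) = y j ∧ r j < θ (G.src (f j)) := by
  refine LGraph.exists_mem_rays (Q := fun j v => r j < θ v)
    (R := fun j e => G.lab e = y j ∧ r j < θ (G.src e)) (v₀ := root)
    (by rw [h.root_eq_one]; exact (hr 0).2) fun j v hv => ?_
  have hlt : β * r j < β * θ v := mul_lt_mul_of_pos_left hv h.base_pos
  have hy : y j ≤ d v := by
    rw [← Nat.lt_add_one_iff, h.digit_add_one, Nat.lt_ceil]
    linarith [hstep j, (hr (j + 1)).1]
  obtain ⟨e, rfl, he⟩ := h.exists_edge v (y j) hy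
  refine ⟨e, rfl, ⟨he, hv⟩, ?_⟩
  rcases h.edge_cases e with ⟨-, htgt⟩ | ⟨-, htgt⟩
  · rw [htgt, h.root_eq_one]
    exact (hr (j + 1)).2
  · rw [htgt, he, hstep]
    linarith

end IsRemainderFunction

lemma exists_betaDigit_eq_of_mem_betaShift {β : ℝ} {x : Seq} (hx : x ∈ betaShift β) (i : ℤ)
    (m : ℕ) : ∃ t ∈ Set.Ico (0 : ℝ) 1, ∀ j < m, betaDigit β t j = x (i + j) := by
  -- Reading one more letter on the left excludes the remainder `1`, which only occurs at `t = 1`.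
  obtain ⟨t, -, k, m', hword⟩ := hx (i - 1) (m + 1)
  obtain rfl : m + 1 = m' := by
    simpa only [wordAt, List.length_ofFn] using congrArg List.length hword
  refine ⟨betaR β t (k + 1), ⟨Int.fract_nonneg _, Int.fract_lt_one _⟩, fun j hj => ?_⟩
  have hletter := congrFun (List.ofFn_injective hword) ⟨j + 1, by omega⟩
  rw [← betaDigit_add, show k + 1 + j = k + (j + 1) by omega, ← hletter]
  congr 1
  push_cast
  ring

namespace IsRemainderFunction

variable {β : ℝ} {G : LGraph} {root : G.V} {d : G.V → ℕ} {θ : G.V → ℝ}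

lemma surjOn_betaShift [Finite G.E] (h : IsRemainderFunction β G root d θ) :
    Set.SurjOn G.labelMap G.paths (betaShift β) := by
  intro x hx
  obtain ⟨e, he, hlab⟩ := LGraph.exists_mem_paths_of_rays (G := G) (P := fun i e => G.lab e = x i)
    fun N => by
      obtain ⟨t, ht, hdigit⟩ := exists_betaDigit_eq_of_mem_betaShift hx (-N) (2 * N + 1)
      obtain ⟨f, hf, hfy⟩ := h.exists_ray_of_remainders
        (fun j => ⟨betaR_nonneg β ht.1 j, betaR_lt_one β ht.2 j⟩) (betaR_succ h.base_pos.le ht.1)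
      exact ⟨f, hf, fun j hj => by rw [(hfy j).1, hdigit j (by omega), neg_add_eq_sub]⟩
  exact ⟨e, he, funext hlab⟩

/-! ### Comparison of paths with the same labels -/

lemma tgt_le_tgt (h : IsRemainderFunction β G root d θ) {e₁ e₂ : G.E} (hl : G.lab e₁ = G.lab e₂)
    (hsrc : θ (G.src e₁) ≤ θ (G.src e₂)) : θ (G.tgt e₁) ≤ θ (G.tgt e₂) := by
  rcases h.edge_cases e₂ with ⟨-, htgt₂⟩ | ⟨hmax₂, htgt₂⟩
  · rw [htgt₂, h.root_eq_one]
    exact h.le_one _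
  · rcases h.edge_cases e₁ with ⟨hlt₁, -⟩ | ⟨-, htgt₁⟩
    · have := h.digit_le_digit hsrc
      omega
    · rw [htgt₁, htgt₂, hl]
      linarith [mul_le_mul_of_nonneg_left hsrc h.base_pos.le]

variable {e₁ e₂ : ℤ → G.E}

lemma src_le_src_of_le (h : IsRemainderFunction β G root d θ) (h₁ : e₁ ∈ G.paths)
    (h₂ : e₂ ∈ G.paths) (hl : G.labelMap e₁ = G.labelMap e₂) {i j : ℤ} (hij : i ≤ j)
    (hi : θ (G.src (e₁ i)) ≤ θ (G.src (e₂ i))) : θ (G.src (e₁ j)) ≤ θ (G.src (e₂ j)) := by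
  induction j, hij using Int.leInduction with
  | base => exact hi
  | succ j _ ih =>
    rw [← h₁ j, ← h₂ j]
    exact h.tgt_le_tgt (congrFun hl j) ih

lemma src_le_src_of_frequently_eq_one (h : IsRemainderFunction β G root d θ) (h₁ : e₁ ∈ G.paths)
    (h₂ : e₂ ∈ G.paths) (hl : G.labelMap e₁ = G.labelMap e₂)
    (hone : ∃ᶠ i in atBot, θ (G.src (e₂ i)) = 1) (i : ℤ) :
    θ (G.src (e₁ i)) ≤ θ (G.src (e₂ i)) := by
  obtain ⟨j, hji, hj⟩ := frequently_atBot.1 hone i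
  exact h.src_le_src_of_le h₁ h₂ hl hji (hj ▸ h.le_one _)

lemma forall_src_le_or_forall_src_le (h : IsRemainderFunction β G root d θ) (h₁ : e₁ ∈ G.paths)
    (h₂ : e₂ ∈ G.paths) (hl : G.labelMap e₁ = G.labelMap e₂) :
    (∀ i, θ (G.src (e₁ i)) ≤ θ (G.src (e₂ i))) ∨ ∀ i, θ (G.src (e₂ i)) ≤ θ (G.src (e₁ i)) := by
  by_contra! hcross
  obtain ⟨⟨i, hi⟩, j, hj⟩ := hcross
  rcases le_total i j with hij | hij
  · exact (h.src_le_src_of_le h₂ h₁ hl.symm hij hi.le).not_gt hj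
  · exact (h.src_le_src_of_le h₁ h₂ hl hij hj.le).not_gt hi

lemma maximalPast_of_src_le (h : IsRemainderFunction β G root d θ) (hG : G.RightResolving)
    (h₁ : e₁ ∈ G.paths) (h₂ : e₂ ∈ G.paths) (hl : G.labelMap e₁ = G.labelMap e₂) (hne : e₁ ≠ e₂)
    (hle : ∀ i, θ (G.src (e₁ i)) ≤ θ (G.src (e₂ i))) : G.MaximalPast d e₁ := by
  obtain ⟨i, hi⟩ := Function.ne_iff.1 hne
  filter_upwards [eventually_lt_atBot i] with j hj
  rcases h.edge_cases (e₁ j) with ⟨hlt₁, htgt₁⟩ | ⟨hmax₁, -⟩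
  · have hlt₂ : G.lab (e₂ j) < d (G.src (e₂ j)) :=
      (congrFun hl j ▸ hlt₁ : G.labelMap e₂ j < _).trans_le (h.digit_le_digit (hle j))
    obtain ⟨-, htgt₂⟩ := (h.edge_cases (e₂ j)).resolve_right fun hmax₂ => hlt₂.ne hmax₂.1
    have hmeet : G.src (e₁ (j + 1)) = G.src (e₂ (j + 1)) := by rw [← h₁, ← h₂, htgt₁, htgt₂]
    exact absurd (hG.eq_of_src_eq h₁ h₂ hl hj hmeet) hi
  · exact hmax₁

lemma maximalPast_or_maximalPast (h : IsRemainderFunction β G root d θ) (hG : G.RightResolving)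
    (h₁ : e₁ ∈ G.paths) (h₂ : e₂ ∈ G.paths) (hl : G.labelMap e₁ = G.labelMap e₂) (hne : e₁ ≠ e₂) :
    G.MaximalPast d e₁ ∨ G.MaximalPast d e₂ :=
  (h.forall_src_le_or_forall_src_le h₁ h₂ hl).imp
    (h.maximalPast_of_src_le hG h₁ h₂ hl hne)
    (h.maximalPast_of_src_le hG h₂ h₁ hl.symm hne.symm)

lemma eventually_src_eq_of_maximalPast [Finite G.E] (h : IsRemainderFunction β G root d θ)
    (hβ : 1 < β) (h₁ : e₁ ∈ G.paths) (h₂ : e₂ ∈ G.paths) (hl : G.labelMap e₁ = G.labelMap e₂)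
    (hmax₁ : G.MaximalPast d e₁) (hmax₂ : G.MaximalPast d e₂) :
    ∀ᶠ i in atBot, θ (G.src (e₁ i)) = θ (G.src (e₂ i)) := by
  obtain ⟨i, hi⟩ := eventually_atBot.1 (hmax₁.and hmax₂)
  filter_upwards [eventually_le_atBot i] with j hj
  let u : ℕ → ℝ := fun m => θ (G.src (e₁ (j - m))) - θ (G.src (e₂ (j - m)))
  have hu : ∀ m, u m = β * u (m + 1) := fun m => by
    obtain ⟨hm₁, hm₂⟩ := hi (j - (m + 1 : ℕ)) (by omega)
    have hlab : G.lab (e₁ (j - (m + 1 : ℕ))) = G.lab (e₂ (j - (m + 1 : ℕ))) := congrFun hl _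
    simp only [u]
    rw [show j - (m : ℤ) = j - (m + 1 : ℕ) + 1 by push_cast; ring, ← h₁, ← h₂, h.tgt_eq hm₁,
      h.tgt_eq hm₂, hlab]
    ring
  have hfin : (Set.range u).Finite :=
    (Set.finite_range fun q : G.E × G.E => θ (G.src q.1) - θ (G.src q.2)).subset
      (Set.range_subset_iff.2 fun m => ⟨(e₁ (j - m), e₂ (j - m)), rfl⟩)
  have hzero : u 0 = 0 := eq_zero_of_eq_mul_succ_of_finite_range hβ hu hfin
  simpa only [u, Nat.cast_zero, sub_zero, sub_eq_zero] using hzero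

lemma exists_path_forall_maximal [Finite G.E] (h : IsRemainderFunction β G root d θ) :
    ∃ e ∈ G.paths, ∀ i, G.lab (e i) = d (G.src (e i)) := by
  obtain ⟨f, hf, hmax⟩ := LGraph.exists_mem_rays (Q := fun _ _ => True)
    (R := fun _ e => G.lab e = d (G.src e)) (v₀ := root) trivial fun _ v _ => by
      obtain ⟨e, rfl, he⟩ := h.exists_edge v (d v) le_rfl
      exact ⟨e, rfl, he, trivial⟩
  exact LGraph.exists_mem_paths_of_rays (P := fun _ e => G.lab e = d (G.src e))
    fun _ => ⟨f, hf, fun j _ => hmax j⟩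

lemma exists_path_src_lt [Finite G.E] (h : IsRemainderFunction β G root d θ) {e : ℤ → G.E}
    (he : e ∈ G.paths) (hmax : ∀ i, G.lab (e i) = d (G.src (e i)))
    (hlt : ∀ i, θ (G.src (e i)) < 1) :
    ∃ e' ∈ G.paths, G.labelMap e' = G.labelMap e ∧ ∀ i, θ (G.src (e i)) < θ (G.src (e' i)) := by
  obtain ⟨e', he', hP⟩ := LGraph.exists_mem_paths_of_rays (G := G)
    (P := fun i e' => G.lab e' = G.lab (e i) ∧ θ (G.src (e i)) < θ (G.src e')) fun N => by
      obtain ⟨f, hf, hP⟩ := h.exists_ray_of_remainders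
        (r := fun j => θ (G.src (e (j - N)))) (y := fun j => G.lab (e (j - N)))
        (fun j => ⟨(h.pos _).le, hlt _⟩) fun j => by
          rw [← h.tgt_eq (hmax _), he, Nat.cast_succ, add_sub_right_comm]
      exact ⟨f, hf, fun j _ => hP j⟩
  exact ⟨e', he', funext fun i => (hP i).1, fun i => (hP i).2⟩

end IsRemainderFunction

/-! ### The cover of the beta-shift -/

namespace betaGraph

variable {n p : ℕ} {hp : 0 < p} {g : ℕ → ℕ}

/-- The 0-based index of a vertex: `v_{i+1}` has index `i`. -/
def index (v : (betaGraph n p hp g).V) : ℕ := Fin.val (n := n + p) v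

/-- The vertex `v₁`. -/
def root : (betaGraph n p hp g).V := (⟨0, by omega⟩ : Fin (n + p))

instance : Finite (betaGraph n p hp g).E :=
  inferInstanceAs (Finite ((Σ i : Fin (n + p), Fin (g (i : ℕ))) ⊕ Fin (n + p)))

lemma index_injective : Function.Injective (index : (betaGraph n p hp g).V → ℕ) :=
  Fin.val_injective (n := n + p)

lemma index_lt (v : (betaGraph n p hp g).V) : index v < n + p :=
  Fin.isLt (n := n + p) v

lemma edge_cases (e : (betaGraph n p hp g).E) :
    ((betaGraph n p hp g).lab e < g (index ((betaGraph n p hp g).src e)) ∧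
      (betaGraph n p hp g).tgt e = root) ∨
    ((betaGraph n p hp g).lab e = g (index ((betaGraph n p hp g).src e)) ∧
      (index ((betaGraph n p hp g).tgt e) = index ((betaGraph n p hp g).src e) + 1 ∨
        (index ((betaGraph n p hp g).src e) + 1 = n + p ∧
          index ((betaGraph n p hp g).tgt e) = n))) := by
  rcases e with ⟨i, a⟩ | i
  · exact Or.inl ⟨a.isLt, rfl⟩
  · refine Or.inr ⟨rfl, ?_⟩
    by_cases h : (i : ℕ) + 1 < n + p
    · exact Or.inl (by simp [index, betaGraph, h])
    · have hlast : (i : ℕ) + 1 = n + p := by omega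
      exact Or.inr ⟨hlast, by simp [index, betaGraph, h]⟩

lemma rightResolving : (betaGraph n p hp g).RightResolving := by
  rintro (⟨i, a⟩ | i) (⟨j, b⟩ | j) hsrc hlab <;> obtain rfl : i = j := hsrc
  · obtain rfl : a = b := Fin.ext hlab
    rfl
  · exact absurd hlab a.isLt.ne
  · exact absurd hlab b.isLt.ne'
  · rfl

lemma exists_edge (v : (betaGraph n p hp g).V) {a : ℕ} (ha : a ≤ g (index v)) :
    ∃ e, (betaGraph n p hp g).src e = v ∧ (betaGraph n p hp g).lab e = a := by
  rcases ha.lt_or_eq with hlt | rfl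
  · exact ⟨Sum.inl ⟨v, ⟨a, hlt⟩⟩, rfl, rfl⟩
  · exact ⟨Sum.inr v, rfl, rfl⟩

lemma index_tgt_of_maximal {e : (betaGraph n p hp g).E}
    (he : (betaGraph n p hp g).lab e = g (index ((betaGraph n p hp g).src e))) :
    index ((betaGraph n p hp g).tgt e) = index ((betaGraph n p hp g).src e) + 1 ∨
      (index ((betaGraph n p hp g).src e) + 1 = n + p ∧ index ((betaGraph n p hp g).tgt e) = n) :=
  ((edge_cases e).resolve_left fun hlt => hlt.1.ne he).2

lemma min_le_index_src {e : ℤ → (betaGraph n p hp g).E} (he : e ∈ (betaGraph n p hp g).paths)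
    {i : ℤ} {m : ℕ} (hmax : ∀ k : ℕ, k < m → (betaGraph n p hp g).lab (e (i + k)) =
      g (index ((betaGraph n p hp g).src (e (i + k))))) :
    min n m ≤ index ((betaGraph n p hp g).src (e (i + m))) := by
  induction m with
  | zero => omega
  | succ m ih =>
    have hm := ih fun k hk => hmax k (hk.trans m.lt_succ_self)
    rw [Nat.cast_succ, ← add_assoc, ← he]
    rcases index_tgt_of_maximal (hmax m m.lt_succ_self) with hnext | ⟨-, hnext⟩ <;> omega

lemma eventually_le_index_src {e : ℤ → (betaGraph n p hp g).E}
    (he : e ∈ (betaGraph n p hp g).paths) (hmax : (betaGraph n p hp g).MaximalPast (g ∘ index) e) :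
    ∀ᶠ i in atBot, n ≤ index ((betaGraph n p hp g).src (e i)) := by
  obtain ⟨i, hi⟩ := eventually_atBot.1 hmax
  filter_upwards [eventually_le_atBot i] with j hj
  have hmin := min_le_index_src he (i := j - n) (m := n) fun k hk => hi _ (by omega)
  rwa [min_self, sub_add_cancel] at hmin

variable {β : ℝ} {ρ : ℕ → ℝ}

lemma remainder_tgt_of_maximal (hnp : ρ (n + p) = ρ n) {e : (betaGraph n p hp g).E}
    (he : (betaGraph n p hp g).lab e = g (index ((betaGraph n p hp g).src e))) :
    ρ (index ((betaGraph n p hp g).tgt e)) = ρ (index ((betaGraph n p hp g).src e) + 1) := by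
  rcases index_tgt_of_maximal he with htgt | ⟨hsrc, htgt⟩
  · rw [htgt]
  · rw [htgt, hsrc, hnp]

lemma isRemainderFunction (h : IsRemainderSeq β g ρ) (hnp : ρ (n + p) = ρ n) :
    IsRemainderFunction β (betaGraph n p hp g) root (g ∘ index) (ρ ∘ index) where
  root_eq_one := h.zero
  pos _ := h.pos _
  le_one _ := h.le_one _
  edge_cases e := (edge_cases e).imp_right fun hmax =>
    ⟨hmax.1, by rw [hmax.1]; exact (remainder_tgt_of_maximal hnp hmax.1).trans (h.succ _)⟩
  exists_edge v _ ha := exists_edge v ha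

lemma remainder_src_add (h : IsRemainderSeq β g ρ) (hnp : ρ (n + p) = ρ n)
    {e : ℤ → (betaGraph n p hp g).E} (he : e ∈ (betaGraph n p hp g).paths) {i : ℤ} {m : ℕ}
    (hmax : ∀ k : ℕ, k < m → (betaGraph n p hp g).lab (e (i + k)) =
      g (index ((betaGraph n p hp g).src (e (i + k))))) :
    ρ (index ((betaGraph n p hp g).src (e (i + m)))) =
      ρ (index ((betaGraph n p hp g).src (e i)) + m) := by
  induction m with
  | zero => rw [Nat.cast_zero, add_zero, add_zero]
  | succ m ih =>
    have hm := ih fun k hk => hmax k (hk.trans m.lt_succ_self)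
    rw [Nat.cast_succ, ← add_assoc, ← he, remainder_tgt_of_maximal hnp (hmax m m.lt_succ_self),
      h.add_eq_add hm 1, add_assoc]

lemma frequently_remainder_src_eq_one (h : IsRemainderSeq β g ρ) (hρ : Function.Periodic ρ p)
    {e : ℤ → (betaGraph n p hp g).E} (he : e ∈ (betaGraph n p hp g).paths)
    (hmax : (betaGraph n p hp g).MaximalPast (g ∘ index) e) :
    ∃ᶠ i in atBot, ρ (index ((betaGraph n p hp g).src (e i))) = 1 := by
  obtain ⟨i, hi⟩ := eventually_atBot.1 hmax
  refine frequently_atBot.2 fun a => ?_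
  let j := min i a - p
  let s := index ((betaGraph n p hp g).src (e j))
  have hs : s + (p - s % p) = (s / p + 1) * p := by
    have := Nat.mod_lt s hp
    have := Nat.div_add_mod' s p
    rw [add_one_mul]
    omega
  refine ⟨j + (p - s % p : ℕ), by omega, ?_⟩
  rw [remainder_src_add h (hρ n) he fun k hk => hi _ (by omega), hs, ← h.zero]
  exact hρ.nat_mul_eq (s / p + 1)

/-! ### Fibres of the covering map -/

variable {e₁ e₂ e₃ : ℤ → (betaGraph n p hp g).E}

lemma eq_of_maximalPast (h : IsRemainderSeq β g ρ) (hβ : 1 < β) (hnp : ρ (n + p) = ρ n)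
    (hinj : Set.InjOn ρ (Set.Ico n (n + p))) (h₁ : e₁ ∈ (betaGraph n p hp g).paths)
    (h₂ : e₂ ∈ (betaGraph n p hp g).paths)
    (hl : (betaGraph n p hp g).labelMap e₁ = (betaGraph n p hp g).labelMap e₂)
    (hmax₁ : (betaGraph n p hp g).MaximalPast (g ∘ index) e₁)
    (hmax₂ : (betaGraph n p hp g).MaximalPast (g ∘ index) e₂) : e₁ = e₂ := by
  have hsrc : ∀ᶠ i in atBot,
      (betaGraph n p hp g).src (e₁ i) = (betaGraph n p hp g).src (e₂ i) := by
    filter_upwards [(isRemainderFunction h hnp).eventually_src_eq_of_maximalPast hβ h₁ h₂ hl hmax₁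
      hmax₂, eventually_le_index_src h₁ hmax₁, eventually_le_index_src h₂ hmax₂] with i hi hn₁ hn₂
    exact index_injective (hinj ⟨hn₁, index_lt _⟩ ⟨hn₂, index_lt _⟩ hi)
  funext k
  obtain ⟨i, hi, hik⟩ := (hsrc.and (eventually_le_atBot k)).exists
  exact rightResolving.eq_of_src_eq h₁ h₂ hl hik hi

lemma eq_or_eq_or_eq_of_labelMap_eq (h : IsRemainderSeq β g ρ) (hβ : 1 < β)
    (hnp : ρ (n + p) = ρ n) (hinj : Set.InjOn ρ (Set.Ico n (n + p)))
    (h₁ : e₁ ∈ (betaGraph n p hp g).paths) (h₂ : e₂ ∈ (betaGraph n p hp g).paths)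
    (h₃ : e₃ ∈ (betaGraph n p hp g).paths)
    (h₁₂ : (betaGraph n p hp g).labelMap e₁ = (betaGraph n p hp g).labelMap e₂)
    (h₂₃ : (betaGraph n p hp g).labelMap e₂ = (betaGraph n p hp g).labelMap e₃) :
    e₁ = e₂ ∨ e₁ = e₃ ∨ e₂ = e₃ := by
  have hθ := isRemainderFunction (hp := hp) h hnp
  have h₁₃ := h₁₂.trans h₂₃
  by_contra! ⟨hne₁₂, hne₁₃, hne₂₃⟩
  have hor₁₂ := hθ.maximalPast_or_maximalPast rightResolving h₁ h₂ h₁₂ hne₁₂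
  have hor₁₃ := hθ.maximalPast_or_maximalPast rightResolving h₁ h₃ h₁₃ hne₁₃
  have hor₂₃ := hθ.maximalPast_or_maximalPast rightResolving h₂ h₃ h₂₃ hne₂₃
  have hnot₁₂ := fun hmax₁ => mt (eq_of_maximalPast h hβ hnp hinj h₁ h₂ h₁₂ hmax₁) hne₁₂
  have hnot₁₃ := fun hmax₁ => mt (eq_of_maximalPast h hβ hnp hinj h₁ h₃ h₁₃ hmax₁) hne₁₃
  have hnot₂₃ := fun hmax₂ => mt (eq_of_maximalPast h hβ hnp hinj h₂ h₃ h₂₃ hmax₂) hne₂₃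
  tauto

lemma injOn_labelMap (h : IsRemainderSeq β g ρ) (hβ : 1 < β) (hρ : Function.Periodic ρ p)
    (hinj : Set.InjOn ρ (Set.Ico n (n + p))) :
    Set.InjOn (betaGraph n p hp g).labelMap (betaGraph n p hp g).paths := by
  have hθ := isRemainderFunction (hp := hp) h (hρ n)
  have heq : ∀ e₁ ∈ (betaGraph n p hp g).paths, ∀ e₂ ∈ (betaGraph n p hp g).paths,
      (betaGraph n p hp g).labelMap e₁ = (betaGraph n p hp g).labelMap e₂ →
      (betaGraph n p hp g).MaximalPast (g ∘ index) e₁ → e₁ = e₂ := by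
    intro e₁ h₁ e₂ h₂ hl hmax₁
    by_contra hne
    have hle := hθ.src_le_src_of_frequently_eq_one h₂ h₁ hl.symm
      (frequently_remainder_src_eq_one h hρ h₁ hmax₁)
    have hmax₂ := hθ.maximalPast_of_src_le rightResolving h₂ h₁ hl.symm (Ne.symm hne) hle
    exact hne (eq_of_maximalPast h hβ (hρ n) hinj h₁ h₂ hl hmax₁ hmax₂)
  intro e₁ h₁ e₂ h₂ hl
  by_contra hne
  rcases hθ.maximalPast_or_maximalPast rightResolving h₁ h₂ hl hne with hmax₁ | hmax₂
  · exact hne (heq e₁ h₁ e₂ h₂ hl hmax₁)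
  · exact hne (heq e₂ h₂ e₁ h₁ hl.symm hmax₂).symm

lemma exists_labelMap_eq_and_ne (h : IsRemainderSeq β g ρ) (hnp : ρ (n + p) = ρ n)
    (hlt : ∀ k ≥ n, ρ k < 1) :
    ∃ e₁ ∈ (betaGraph n p hp g).paths, ∃ e₂ ∈ (betaGraph n p hp g).paths,
      (betaGraph n p hp g).labelMap e₁ = (betaGraph n p hp g).labelMap e₂ ∧ e₁ ≠ e₂ := by
  have hθ := isRemainderFunction (hp := hp) h hnp
  obtain ⟨e, he, hmax⟩ := hθ.exists_path_forall_maximal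
  have hcycle : ∀ i, n ≤ index ((betaGraph n p hp g).src (e i)) := fun i => by
    have hmin := min_le_index_src he (i := i - n) (m := n) fun _ _ => hmax _
    rwa [min_self, sub_add_cancel] at hmin
  obtain ⟨e', he', hl, habove⟩ := hθ.exists_path_src_lt he hmax fun i => hlt _ (hcycle i)
  refine ⟨e', he', e, he, hl, ?_⟩
  rintro rfl
  exact lt_irrefl _ (habove 0)

end betaGraph

theorem statement11_general (β : ℝ) (hβ : 1 < β) (g : ℕ → ℕ) (hg : IsGenSeq β g)
    (n p : ℕ) (hp : 0 < p)
    (hper : ∀ i ≥ n, g (i + p) = g i)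
    (hpmin : ∀ p' : ℕ, 0 < p' → (∃ n' : ℕ, ∀ i ≥ n', g (i + p') = g i) → p ≤ p') :
    ((∃ q : ℕ, 0 < q ∧ ∀ i : ℕ, g (i + q) = g i) →
      Set.BijOn (betaGraph n p hp g).labelMap (betaGraph n p hp g).paths
        (betaShift β)) ∧
    ((¬ ∃ q : ℕ, 0 < q ∧ ∀ i : ℕ, g (i + q) = g i) →
      Set.MapsTo (betaGraph n p hp g).labelMap (betaGraph n p hp g).paths
        (betaShift β) ∧
      Set.SurjOn (betaGraph n p hp g).labelMap (betaGraph n p hp g).paths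
        (betaShift β) ∧
      (∀ x ∈ betaShift β, ∀ e₁ e₂ e₃ : ℤ → (betaGraph n p hp g).E,
        e₁ ∈ (betaGraph n p hp g).paths → e₂ ∈ (betaGraph n p hp g).paths →
        e₃ ∈ (betaGraph n p hp g).paths →
        (betaGraph n p hp g).labelMap e₁ = x →
        (betaGraph n p hp g).labelMap e₂ = x →
        (betaGraph n p hp g).labelMap e₃ = x →
        e₁ = e₂ ∨ e₁ = e₃ ∨ e₂ = e₃) ∧
      ∃ x ∈ betaShift β, ∃ e₁ e₂ : ℤ → (betaGraph n p hp g).E,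
        e₁ ∈ (betaGraph n p hp g).paths ∧ e₂ ∈ (betaGraph n p hp g).paths ∧
        (betaGraph n p hp g).labelMap e₁ = x ∧
        (betaGraph n p hp g).labelMap e₂ = x ∧ e₁ ≠ e₂) := by
  obtain ⟨ρ, h⟩ := hg.exists_isRemainderSeq hβ
  have hnp : ρ (n + p) = ρ n := (h.eq_iff hβ).2 fun m => by
    rw [add_right_comm, hper _ (Nat.le_add_right n m)]
  have hinj : Set.InjOn ρ (Set.Ico n (n + p)) := h.injOn_Ico hpmin n
  have hθ := betaGraph.isRemainderFunction (hp := hp) h hnp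
  refine ⟨fun ⟨q, hq, hgq⟩ => ?_, fun hnper => ?_⟩
  · have hρ := h.periodic hβ (periodic_of_eventually_periodic hq hgq hper)
    exact ⟨hθ.mapsTo_betaShift, betaGraph.injOn_labelMap h hβ hρ hinj, hθ.surjOn_betaShift⟩
  · have hn : n ≠ 0 := fun hn => hnper ⟨p, hp, fun i => hper i (hn ▸ i.zero_le)⟩
    have hlt : ∀ k ≥ n, ρ k < 1 := fun k hk => (h.le_one k).lt_of_ne fun hk₁ =>
      hnper ⟨k, by omega, h.periodic_of_eq_one hk₁⟩
    obtain ⟨e₁, he₁, e₂, he₂, hl, hne⟩ := betaGraph.exists_labelMap_eq_and_ne (hp := hp) h hnp hlt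
    refine ⟨hθ.mapsTo_betaShift, hθ.surjOn_betaShift, ?_,
      _, hθ.mapsTo_betaShift he₂, e₁, e₂, he₁, he₂, hl, rfl, hne⟩
    rintro x - e₁ e₂ e₃ h₁ h₂ h₃ rfl hx₂ hx₃
    exact betaGraph.eq_or_eq_or_eq_of_labelMap_eq h hβ hnp hinj h₁ h₂ h₃ hx₂.symm
      (hx₂.trans hx₃.symm)

/-- Let `β > 1` have eventually periodic generating sequence
`g = g₁⋯g_n (g_{n+1}⋯g_{n+p})^∞` (`n, p ≥ 1` minimal), let `F_β` be the explicit
right Fischer cover graph and `π` the covering map (sending a biinfinite edge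
path to its label sequence).  If `g` is periodic then `π` is a bijection from
the edge paths onto `X_β`; if `g` is not periodic then `π` maps the edge paths
onto `X_β`, every fiber has at most `2` elements, and some fiber has exactly
`2` elements. -/
theorem statement11 (β : ℝ) (hβ : 1 < β) (g : ℕ → ℕ) (hg : IsGenSeq β g)
    (n p : ℕ) (hn : 0 < n) (hp : 0 < p)
    (hper : ∀ i ≥ n, g (i + p) = g i)
    (hpmin : ∀ p' : ℕ, 0 < p' → (∃ n' : ℕ, ∀ i ≥ n', g (i + p') = g i) → p ≤ p')
    (hnmin : ∀ n' : ℕ, 0 < n' → (∀ i ≥ n', g (i + p) = g i) → n ≤ n') :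
    ((∃ q : ℕ, 0 < q ∧ ∀ i : ℕ, g (i + q) = g i) →
      Set.BijOn (betaGraph n p hp g).labelMap (betaGraph n p hp g).paths
        (betaShift β)) ∧
    ((¬ ∃ q : ℕ, 0 < q ∧ ∀ i : ℕ, g (i + q) = g i) →
      Set.MapsTo (betaGraph n p hp g).labelMap (betaGraph n p hp g).paths
        (betaShift β) ∧
      Set.SurjOn (betaGraph n p hp g).labelMap (betaGraph n p hp g).paths
        (betaShift β) ∧
      (∀ x ∈ betaShift β, ∀ e₁ e₂ e₃ : ℤ → (betaGraph n p hp g).E,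
        e₁ ∈ (betaGraph n p hp g).paths → e₂ ∈ (betaGraph n p hp g).paths →
        e₃ ∈ (betaGraph n p hp g).paths →
        (betaGraph n p hp g).labelMap e₁ = x →
        (betaGraph n p hp g).labelMap e₂ = x →
        (betaGraph n p hp g).labelMap e₃ = x →
        e₁ = e₂ ∨ e₁ = e₃ ∨ e₂ = e₃) ∧
      ∃ x ∈ betaShift β, ∃ e₁ e₂ : ℤ → (betaGraph n p hp g).E,
        e₁ ∈ (betaGraph n p hp g).paths ∧ e₂ ∈ (betaGraph n p hp g).paths ∧
        (betaGraph n p hp g).labelMap e₁ = x ∧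
        (betaGraph n p hp g).labelMap e₂ = x ∧ e₁ ≠ e₂) :=
  statement11_general β hβ g hg n p hp hper hpmin

end SymbolicDynamics
end
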